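/- For the 10-to-1 magic state distillation protocol with the [[10,1,2]] code under the noise model above, conditioned on a trivial syndrome, the probability that the output state carries a logical Z error satisfies p_out = p² + 9p³ + O(p⁴). -/

import Mathlib

/-!
The `[[10,1,2]]` code obtained by morphing the 15-qubit Reed–Muller code,
with seven simplex qubits (noisy `|T⟩` states, indexed by nonzero `v ∈ F₂³`)
and three edge qubits (a noisy `|CCZ⟩` state).  Undetected Z-errors are those
commuting with all three X-stabilizer generators; such an error is a logical Z
iff it anticommutes with the logical X (supported on the seven simplex qubits),
i.e. iff the parity of the `|T⟩` errors is odd.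
-/

abbrev V3 := {v : Fin 3 → ZMod 2 // v ≠ 0}

noncomputable def pT (p : ℝ) (e : V3 → Bool) : ℝ :=
  ∏ v : V3, if e v then p else 1 - p

noncomputable def pCCZ (p : ℝ) (b : Fin 3 → ZMod 2) : ℝ :=
  if b = 0 then 1 - p else p / 7

def syndromeTrivial (e : V3 → Bool) (b : Fin 3 → ZMod 2) : Prop :=
  ∀ i : Fin 3, (∑ v : V3, if v.1 i = 1 ∧ e v then (1 : ZMod 2) else 0) = b i

instance (e : V3 → Bool) (b : Fin 3 → ZMod 2) : Decidable (syndromeTrivial e b) := by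
  unfold syndromeTrivial; infer_instance

/-- The undetected error acts as a nontrivial logical Z on the output: it
anticommutes with the logical X, i.e. the parity of the `|T⟩` errors is odd. -/
def logicalZErr (e : V3 → Bool) : Prop :=
  (∑ v : V3, if e v then (1 : ZMod 2) else 0) = 1

instance (e : V3 → Bool) : Decidable (logicalZErr e) := by
  unfold logicalZErr; infer_instance

/-- Probability of a trivial syndrome. -/
noncomputable def pSucc (p : ℝ) : ℝ :=
  ∑ e : V3 → Bool, ∑ b : Fin 3 → ZMod 2,
    if syndromeTrivial e b then pT p e * pCCZ p b else 0

/-- Probability of a trivial syndrome together with a logical Z error. -/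
noncomputable def pFail (p : ℝ) : ℝ :=
  ∑ e : V3 → Bool, ∑ b : Fin 3 → ZMod 2,
    if syndromeTrivial e b ∧ logicalZErr e then pT p e * pCCZ p b else 0

/-- The output error: probability of a logical Z error conditioned on a trivial
syndrome. -/
noncomputable def pOut (p : ℝ) : ℝ := pFail p / pSucc p

/-!
Write `t = 1 - 2p`. By Fourier analysis on `F₂³` the accepted weight, twisted by the sign
`(-1) ^ (a π)` of the logical parity `π`, is a weighted sum over the eight affine functions
`v ↦ a + s ⬝ᵥ v`, and the independence of the `|T⟩` errors turns each term into `t ^ N`, with `N`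
the number of nonzero `v` where the affine function equals `1`. A nonzero linear function takes the
value `1` at four of the seven points, so `a = 0` gives `pSucc = (1 + (7 - 8p) t⁴) / 8` and `a = 1`
gives `pSucc - 2 pFail = (t⁷ + (7 - 8p) t³) / 8`. A factor `1 - p` cancels in `pOut - (p² + 9p³)`,
leaving a denominator bounded away from zero.
-/

open Finset

section CharacterSums

variable {ι A R M : Type*}

lemma addChar_sum [AddCommMonoid A] [CommMonoid M] (ψ : AddChar A M) (s : Finset ι) (f : ι → A) :
    ψ (∑ i ∈ s, f i) = ∏ i ∈ s, ψ (f i) :=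
  map_prod ψ.toMonoidHom (fun i => Multiplicative.ofAdd (f i)) s

variable [Fintype ι]

lemma sum_prod_ite_mul_addChar [DecidableEq ι] [AddCommMonoid A] [CommSemiring R]
    (ψ : AddChar A R) (p q : ι → R) (c : ι → A) :
    ∑ e : ι → Bool, (∏ i, if e i then p i else q i) * ψ (∑ i, if e i then c i else 0) =
      ∏ i, (p i * ψ (c i) + q i) := by
  calc
    _ = ∑ e : ι → Bool, ∏ i, if e i then p i * ψ (c i) else q i := by
      refine sum_congr rfl fun e _ => ?_
      rw [addChar_sum, ← prod_mul_distrib]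
      refine prod_congr rfl fun i _ => ?_
      cases e i <;> simp
    _ = ∏ i, ∑ x : Bool, if x then p i * ψ (c i) else q i := by
      rw [prod_univ_sum, Fintype.piFinset_univ]
    _ = _ := by simp

lemma sum_addChar_dotProduct [DecidableEq ι] [CommRing A] [Fintype A] [DecidableEq A]
    [CommRing R] [IsDomain R] {ψ : AddChar A R} (hψ : ψ.IsPrimitive) (x : ι → A) :
    ∑ s : ι → A, ψ (s ⬝ᵥ x) = if x = 0 then (Fintype.card A : R) ^ Fintype.card ι else 0 := by
  calc
    _ = ∏ i, ∑ a : A, ψ (a * x i) := by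
      rw [prod_univ_sum, Fintype.piFinset_univ]
      exact sum_congr rfl fun s _ => addChar_sum ψ univ _
    _ = ∏ i, if x i = 0 then (Fintype.card A : R) else 0 := by
      simp only [AddChar.sum_mulShift _ hψ, Nat.cast_ite, Nat.cast_zero]
    _ = _ := by simp only [prod_ite_zero, mem_univ, forall_const, prod_const, card_univ, funext_iff,
      Pi.zero_apply]

lemma sum_ite_eq_else [DecidableEq ι] [Ring R] (i : ι) (x y : R) :
    ∑ j, (if j = i then x else y) = x + (Fintype.card ι - 1) * y := by
  calc
    _ = ∑ j, ((if j = i then x - y else 0) + y) :=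
      sum_congr rfl fun j _ => by split_ifs <;> abel
    _ = x - y + Fintype.card ι * y := by
      rw [sum_add_distrib, sum_ite_eq', if_pos (mem_univ i), sum_const, card_univ, nsmul_eq_mul]
    _ = _ := by rw [sub_mul, one_mul]; abel

/-- The nontrivial character `x ↦ (-1) ^ x` of `F₂`, as a real-valued additive character. -/
noncomputable def signChar : AddChar (ZMod 2) ℝ :=
  AddChar.zmodChar 2 (ζ := -1) (by norm_num)

lemma signChar_isPrimitive : signChar.IsPrimitive :=
  AddChar.zmodChar_primitive_of_primitive_root 2 (IsPrimitiveRoot.neg_one 0 two_ne_zero.symm)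

lemma signChar_eq_ite (x : ZMod 2) : signChar x = if x = 1 then -1 else 1 := by
  have value : ∀ x : ZMod 2, x.val = if x = 1 then 1 else 0 := by decide
  rw [signChar, AddChar.zmodChar_apply, value, pow_ite, pow_one, pow_zero]

lemma sum_bernoulli_mul_signChar [DecidableEq ι] (p : ℝ) (c : ι → ZMod 2) :
    ∑ e : ι → Bool, (∏ i, if e i then p else 1 - p) * signChar (∑ i, if e i then c i else 0) =
      (1 - 2 * p) ^ #{i | c i = 1} := by
  calc
    _ = ∏ i, (p * signChar (c i) + (1 - p)) := sum_prod_ite_mul_addChar signChar _ _ c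
    _ = ∏ i, if c i = 1 then 1 - 2 * p else 1 := by
      refine prod_congr rfl fun i _ => ?_
      rw [signChar_eq_ite]
      split_ifs <;> ring
    _ = _ := by rw [prod_ite, prod_const, prod_const_one, mul_one]

end CharacterSums

/-- The syndrome of a `|T⟩` error pattern: the sum in `F₂³` of the labels of its errors. An error
pattern is undetected exactly when the `|CCZ⟩` error equals this vector. -/
def errorSyndrome (e : V3 → Bool) : Fin 3 → ZMod 2 := ∑ v : V3, if e v then v.1 else 0

/-- The parity of a `|T⟩` error pattern, which decides whether it acts as a logical `Z`. -/
def errorParity (e : V3 → Bool) : ZMod 2 := ∑ v : V3, if e v then 1 else 0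

lemma syndromeTrivial_iff (e : V3 → Bool) (b : Fin 3 → ZMod 2) :
    syndromeTrivial e b ↔ errorSyndrome e = b := by
  have coord_ite (v : V3) (i : Fin 3) :
      (if e v then v.1 else 0) i = if v.1 i = 1 ∧ e v then 1 else 0 := by
    have binary : ∀ x : ZMod 2, x = if x = 1 then 1 else 0 := by decide
    cases e v
    · simp
    · simpa using binary (v.1 i)
  simp only [syndromeTrivial, errorSyndrome, funext_iff, Finset.sum_apply, coord_ite]

lemma mul_errorParity_add_dotProduct_errorSyndrome (a : ZMod 2) (s : Fin 3 → ZMod 2)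
    (e : V3 → Bool) :
    a * errorParity e + s ⬝ᵥ errorSyndrome e = ∑ v : V3, if e v then a + s ⬝ᵥ v.1 else 0 := by
  rw [errorParity, errorSyndrome, mul_sum, dotProduct_sum, ← sum_add_distrib]
  refine sum_congr rfl fun v _ => ?_
  cases e v <;> simp

lemma sum_pT_mul_signChar (p : ℝ) (a : ZMod 2) (s : Fin 3 → ZMod 2) :
    ∑ e, pT p e * signChar (a * errorParity e + s ⬝ᵥ errorSyndrome e) =
      (1 - 2 * p) ^ #{v : V3 | a + s ⬝ᵥ v.1 = 1} := by
  simp only [pT, mul_errorParity_add_dotProduct_errorSyndrome]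
  exact sum_bernoulli_mul_signChar p fun v : V3 => a + s ⬝ᵥ v.1

lemma pCCZ_eq_sum_signChar (p : ℝ) (b : Fin 3 → ZMod 2) :
    pCCZ p b = (∑ s : Fin 3 → ZMod 2,
      (if s = 0 then 1 else 1 - 8 * p / 7) * signChar (s ⬝ᵥ b)) / 8 := by
  have split_zero (s : Fin 3 → ZMod 2) :
      (if s = 0 then 1 else 1 - 8 * p / 7) * signChar (s ⬝ᵥ b) =
        (if s = 0 then 8 * p / 7 else 0) + (1 - 8 * p / 7) * signChar (s ⬝ᵥ b) := by
    split_ifs with hs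
    · simp [hs]
    · ring
  simp only [split_zero, sum_add_distrib, sum_ite_eq', mem_univ, if_true, ← mul_sum,
    sum_addChar_dotProduct signChar_isPrimitive, ZMod.card, Fintype.card_fin, pCCZ]
  split_ifs <;> push_cast <;> ring

/-- The total weight of the undetected errors, each twisted by the sign `(-1) ^ (a * π)` of its
logical parity `π`: the acceptance probability for `a = 0`, and the difference between the
probabilities of accepting without and with a logical error for `a = 1`. -/
noncomputable def twistedSucc (p : ℝ) (a : ZMod 2) : ℝ :=
  ∑ e, pT p e * pCCZ p (errorSyndrome e) * signChar (a * errorParity e)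

lemma pSucc_eq_twistedSucc (p : ℝ) : pSucc p = twistedSucc p 0 := by
  simp only [pSucc, twistedSucc, syndromeTrivial_iff, sum_ite_eq, mem_univ, if_true, zero_mul,
    AddChar.map_zero_eq_one, mul_one]

lemma pFail_eq_twistedSucc (p : ℝ) : pFail p = (twistedSucc p 0 - twistedSucc p 1) / 2 := by
  have collapse (e : V3 → Bool) :
      (∑ b, if syndromeTrivial e b ∧ logicalZErr e then pT p e * pCCZ p b else 0) =
        if errorParity e = 1 then pT p e * pCCZ p (errorSyndrome e) else 0 := by
    simp only [syndromeTrivial_iff, ite_and, sum_ite_eq, mem_univ, if_true]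
    rfl
  simp only [pFail, twistedSucc, collapse, ← sum_sub_distrib, sum_div]
  refine sum_congr rfl fun e _ => ?_
  rw [zero_mul, one_mul, AddChar.map_zero_eq_one, signChar_eq_ite]
  split_ifs <;> ring

lemma twistedSucc_eq_sum (p : ℝ) (a : ZMod 2) :
    twistedSucc p a = (∑ s : Fin 3 → ZMod 2, (if s = 0 then 1 else 1 - 8 * p / 7) *
      (1 - 2 * p) ^ #{v : V3 | a + s ⬝ᵥ v.1 = 1}) / 8 := by
  simp only [twistedSucc, pCCZ_eq_sum_signChar, ← sum_pT_mul_signChar, AddChar.map_add_eq_mul,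
    mul_sum, sum_div, sum_mul]
  rw [sum_comm]
  exact sum_congr rfl fun s _ => sum_congr rfl fun e _ => by ring

lemma card_affine_eq_one (a : ZMod 2) (s : Fin 3 → ZMod 2) :
    #{v : V3 | a + s ⬝ᵥ v.1 = 1} = if s = 0 then 7 * a.val else 4 - a.val := by
  decide +revert

lemma twistedSucc_eq (p : ℝ) (a : ZMod 2) :
    twistedSucc p a =
      ((1 - 2 * p) ^ (7 * a.val) + (7 - 8 * p) * (1 - 2 * p) ^ (4 - a.val)) / 8 := by
  have merge_ite (s : Fin 3 → ZMod 2) (m n : ℕ) :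
      (if s = 0 then 1 else 1 - 8 * p / 7) * (1 - 2 * p) ^ (if s = 0 then m else n) =
        if s = 0 then (1 - 2 * p) ^ m else (1 - 8 * p / 7) * (1 - 2 * p) ^ n := by
    split_ifs <;> simp only [one_mul]
  simp only [twistedSucc_eq_sum, card_affine_eq_one, merge_ite, sum_ite_eq_else,
    Fintype.card_fun, ZMod.card, Fintype.card_fin]
  push_cast
  ring

lemma pSucc_eq (p : ℝ) : pSucc p = (1 + (7 - 8 * p) * (1 - 2 * p) ^ 4) / 8 := by
  simpa using (pSucc_eq_twistedSucc p).trans (twistedSucc_eq p 0)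

lemma pSucc_sub_two_mul_pFail (p : ℝ) :
    pSucc p - 2 * pFail p = ((1 - 2 * p) ^ 7 + (7 - 8 * p) * (1 - 2 * p) ^ 3) / 8 := by
  have bias : pSucc p - 2 * pFail p = twistedSucc p 1 := by
    rw [pSucc_eq_twistedSucc, pFail_eq_twistedSucc]
    ring
  exact bias.trans (twistedSucc_eq p 1)

/-- The polynomial `pSucc p / (1 - p)`. -/
def acceptanceCofactor (p : ℝ) : ℝ := 16 * p ^ 4 - 30 * p ^ 3 + 22 * p ^ 2 - 7 * p + 1

/-- The polynomial `(pFail p - (p ^ 2 + 9 * p ^ 3) * pSucc p) / (p ^ 4 * (1 - p))`, the numerator of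
the error of the cubic expansion of `pOut`. -/
def cubicRemainder (p : ℝ) : ℝ := 27 - 148 * p + 246 * p ^ 2 - 144 * p ^ 3

lemma pSucc_eq_mul_acceptanceCofactor (p : ℝ) : pSucc p = (1 - p) * acceptanceCofactor p := by
  rw [pSucc_eq, acceptanceCofactor]
  ring

lemma pFail_sub_cubic_mul_pSucc (p : ℝ) :
    pFail p - (p ^ 2 + 9 * p ^ 3) * pSucc p = (1 - p) * (p ^ 4 * cubicRemainder p) := by
  rw [cubicRemainder]
  linear_combination (1 / 2 - p ^ 2 - 9 * p ^ 3) * pSucc_eq p - pSucc_sub_two_mul_pFail p / 2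

lemma one_eighth_le_acceptanceCofactor (p : ℝ) : 1 / 8 ≤ acceptanceCofactor p := by
  rw [acceptanceCofactor]
  nlinarith [sq_nonneg (4 * p ^ 2 - 15 / 4 * p + 3 / 4), sq_nonneg (p - 1 / 4)]

lemma acceptanceCofactor_pos (p : ℝ) : 0 < acceptanceCofactor p :=
  lt_of_lt_of_le (by norm_num) (one_eighth_le_acceptanceCofactor p)

lemma abs_cubicRemainder_le {p : ℝ} (h0 : 0 ≤ p) (h1 : p ≤ 1) : |cubicRemainder p| ≤ 27 := by
  have lower : 0 ≤ (1 - p) * (46 - 102 * p + 144 * p ^ 2) :=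
    mul_nonneg (by linarith) (by nlinarith [sq_nonneg (p - 1 / 3)])
  have upper : 0 ≤ p * (148 - 246 * p + 144 * p ^ 2) :=
    mul_nonneg h0 (by nlinarith [sq_nonneg (p - 1)])
  rw [cubicRemainder, abs_le]
  constructor <;> linarith

lemma pOut_sub_cubic {p : ℝ} (hp : p ≠ 1) :
    pOut p - (p ^ 2 + 9 * p ^ 3) = p ^ 4 * cubicRemainder p / acceptanceCofactor p := by
  have one_sub_ne_zero : 1 - p ≠ 0 := sub_ne_zero.mpr hp.symm
  have succ_ne_zero : pSucc p ≠ 0 := by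
    rw [pSucc_eq_mul_acceptanceCofactor]
    exact mul_ne_zero one_sub_ne_zero (acceptanceCofactor_pos p).ne'
  calc
    _ = (pFail p - (p ^ 2 + 9 * p ^ 3) * pSucc p) / pSucc p := by
      rw [pOut, sub_div, mul_div_cancel_right₀ _ succ_ne_zero]
    _ = _ := by
      rw [pFail_sub_cubic_mul_pSucc, pSucc_eq_mul_acceptanceCofactor,
        mul_div_mul_left _ _ one_sub_ne_zero]

theorem ten_to_one_output_error_general :
    ∃ C : ℝ, 0 < C ∧ ∀ p : ℝ, 0 ≤ p → p < 1 →
      |pOut p - (p ^ 2 + 9 * p ^ 3)| ≤ C * p ^ 4 := by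
  refine ⟨27 / (1 / 8), by norm_num, fun p h0 h1 => ?_⟩
  calc
    _ = |cubicRemainder p| / acceptanceCofactor p * p ^ 4 := by
      rw [pOut_sub_cubic h1.ne, abs_div, abs_mul, abs_of_pos (acceptanceCofactor_pos p),
        abs_of_nonneg (pow_nonneg h0 4), mul_comm, mul_div_right_comm]
    _ ≤ 27 / (1 / 8) * p ^ 4 := by
      gcongr
      · exact abs_cubicRemainder_le h0 h1.le
      · exact one_eighth_le_acceptanceCofactor p

/-- For the 10-to-1 magic state distillation protocol with the
`[[10,1,2]]` code under the stated noise model, conditioned on a trivial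
syndrome, the output logical Z error probability satisfies
`p_out = p² + 9p³ + O(p⁴)`. -/
theorem ten_to_one_output_error :
    ∃ C : ℝ, 0 < C ∧ ∀ p : ℝ, 0 ≤ p → p ≤ 1 / 2 →
      |pOut p - (p ^ 2 + 9 * p ^ 3)| ≤ C * p ^ 4 := by
  obtain ⟨C, hC, bound⟩ := ten_to_one_output_error_general
  exact ⟨C, hC, fun p h0 h1 => bound p h0 (by linarith)⟩
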